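/- Fix natural numbers d and L, and define the Morton code of x : Fin d → ℕ by morton(x) = ∑_{j<d} ∑_{k<L} (if bit k of x j is set then 2^{k·d + j} else 0). If x, y : Fin d → ℕ satisfy x j ≤ y j for all j and y j < 2^L for all j, then morton(x) ≤ morton(y). -/

import Mathlib

theorem spread_lt (B : ℕ) (hB : 2 ≤ B) : ∀ (L a b : ℕ), a < b → b < 2 ^ L →
    (∑ k : Fin L, if Nat.testBit a (k : ℕ) then B ^ (k : ℕ) else 0)
      < ∑ k : Fin L, if Nat.testBit b (k : ℕ) then B ^ (k : ℕ) else 0 := by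
  intro L
  induction L with
  | zero => intro a b h1 h2; simp at h2; omega
  | succ L ih =>
    have key : ∀ a : ℕ, (∑ k : Fin (L+1), if Nat.testBit a (k : ℕ) then B ^ (k : ℕ) else 0)
        = a % 2 + B * ∑ k : Fin L, if Nat.testBit (a / 2) (k : ℕ) then B ^ (k : ℕ) else 0 := by
      intro a
      rw [Fin.sum_univ_succ, Finset.mul_sum]
      congr 1
      · rcases Nat.mod_two_eq_zero_or_one a with h | h <;> simp [Nat.testBit_zero, h]
      · refine Finset.sum_congr rfl fun k _ => ?_
        rw [Fin.val_succ, Nat.testBit_succ, mul_ite, mul_zero, pow_succ']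
    intro a b h1 h2
    rw [key, key]
    by_cases h : a / 2 = b / 2
    · rw [h]; omega
    · have := ih (a / 2) (b / 2) (by omega) (by rw [pow_succ] at h2; omega)
      have h3 := Nat.mul_le_mul_left B (Nat.succ_le_of_lt this)
      rw [Nat.mul_succ] at h3
      omega

/-- Monotonicity of the Morton (Z-curve) code with respect to the
coordinatewise order, for coordinates using at most `L` bits. -/
theorem morton_monotone (d L : ℕ) (x y : Fin d → ℕ)
    (hxy : ∀ j, x j ≤ y j) (hy : ∀ j, y j < 2 ^ L) :
    (∑ j : Fin d, ∑ k : Fin L,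
        if Nat.testBit (x j) (k : ℕ) then 2 ^ ((k : ℕ) * d + (j : ℕ)) else 0)
      ≤ ∑ j : Fin d, ∑ k : Fin L,
        if Nat.testBit (y j) (k : ℕ) then 2 ^ ((k : ℕ) * d + (j : ℕ)) else 0 := by
  refine Finset.sum_le_sum fun j _ => ?_
  have key : ∀ a : ℕ, (∑ k : Fin L,
      if Nat.testBit a (k : ℕ) then 2 ^ ((k : ℕ) * d + (j : ℕ)) else 0)
      = 2 ^ (j : ℕ) * ∑ k : Fin L, if Nat.testBit a (k : ℕ) then (2 ^ d) ^ (k : ℕ) else 0 := by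
    intro a
    rw [Finset.mul_sum]
    refine Finset.sum_congr rfl fun k _ => ?_
    rw [mul_ite, mul_zero, ← pow_mul, ← pow_add, Nat.mul_comm d, Nat.add_comm]
  rw [key, key]
  apply Nat.mul_le_mul_left
  rcases (hxy j).eq_or_lt with h | h
  · rw [h]
  · refine (spread_lt (2 ^ d) ?_ L _ _ h (hy j)).le
    have hd : d ≠ 0 := by have := j.2; omega
    exact Nat.le_self_pow hd 2
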